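/- Let 0 < γ < π/2 and define f : [0, π/2 − γ) → ℝ by f(x) = tan(x)/tan(γ + x). Then f is monotone increasing on [0, (1/2)(π/2 − γ)] and monotone decreasing on [(1/2)(π/2 − γ), π/2 − γ). -/

import Mathlib

open Real

lemma aux_formula (γ x : ℝ) (hγ0 : 0 < γ) (hx0 : 0 ≤ x) (hx1 : x < π / 2 - γ) :
    Real.tan x / Real.tan (γ + x) = 1 - 2 * sin γ / (sin (2 * x + γ) + sin γ) := by
  have h1 : 0 < cos x := cos_pos_of_mem_Ioo ⟨by linarith, by linarith⟩
  have h2 : 0 < cos (γ + x) := cos_pos_of_mem_Ioo ⟨by linarith, by linarith⟩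
  have h3 : 0 < sin (γ + x) := sin_pos_of_pos_of_lt_pi (by linarith) (by linarith)
  have e1 : sin (2 * x + γ) = sin (γ + x) * cos x + cos (γ + x) * sin x := by
    rw [← sin_add]; ring_nf
  have e2 : sin γ = sin (γ + x) * cos x - cos (γ + x) * sin x := by
    rw [← sin_sub]; ring_nf
  have e3 : sin (2 * x + γ) + sin γ = 2 * (sin (γ + x) * cos x) := by linarith
  rw [e3, e2, tan_eq_sin_div_cos, tan_eq_sin_div_cos]
  field_simp
  ring

lemma aux_le (γ x y : ℝ) (hγ0 : 0 < γ) (hx0 : 0 ≤ x) (hx1 : x < π / 2 - γ)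
    (hy0 : 0 ≤ y) (hy1 : y < π / 2 - γ) (h : sin (2 * x + γ) ≤ sin (2 * y + γ)) :
    Real.tan x / Real.tan (γ + x) ≤ Real.tan y / Real.tan (γ + y) := by
  rw [aux_formula γ x hγ0 hx0 hx1, aux_formula γ y hγ0 hy0 hy1]
  have h1 : 0 < sin γ := sin_pos_of_pos_of_lt_pi hγ0 (by linarith)
  have h2 : 0 < sin (2 * x + γ) := sin_pos_of_pos_of_lt_pi (by linarith) (by linarith)
  gcongr

/-- For `0 < γ < π/2`, the function `f(x) = tan x / tan(γ + x)` is monotone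
increasing on `[0, (1/2)(π/2 − γ)]` and monotone decreasing on `[(1/2)(π/2 − γ), π/2 − γ)`. -/
theorem stmt_1 (γ : ℝ) (hγ0 : 0 < γ) (hγ1 : γ < π / 2) :
    MonotoneOn (fun x : ℝ => Real.tan x / Real.tan (γ + x))
      (Set.Icc 0 ((π / 2 - γ) / 2)) ∧
    AntitoneOn (fun x : ℝ => Real.tan x / Real.tan (γ + x))
      (Set.Ico ((π / 2 - γ) / 2) (π / 2 - γ)) := by
  constructor
  · rintro x ⟨hx0, hx1⟩ y ⟨hy0, hy1⟩ hxy
    refine aux_le γ x y hγ0 (by linarith) (by linarith) (by linarith) (by linarith) ?_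
    exact sin_le_sin_of_le_of_le_pi_div_two (by linarith) (by linarith) (by linarith)
  · rintro x ⟨hx0, hx1⟩ y ⟨hy0, hy1⟩ hxy
    refine aux_le γ y x hγ0 (by linarith) (by linarith) (by linarith) (by linarith) ?_
    rw [← sin_pi_sub (2 * y + γ), ← sin_pi_sub (2 * x + γ)]
    exact sin_le_sin_of_le_of_le_pi_div_two (by linarith) (by linarith) (by linarith)
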